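/- arXiv:1504.00354 — 2 statements merged into one kernel-verified Lean document; each statement's English description precedes it below -/
import Mathlib

section
/- Let E be a homogeneous effect algebra. (a) If M is an internally compatible subset of E, then the closure M̄ is an internally compatible set. (b) If M is a maximal internally compatible subset of E, then M = M̄. -/
/-- An effect algebra: a partial commutative, associative operation `oplus`
(with definedness encoded via `Option`), constants `zero` and `one`,
unique orthosupplements, and `a ⊕ 1` defined only for `a = 0`. -/
structure EffectAlgebra (E : Type*) where
  oplus : E → E → Option E
  zero : E
  one : E
  comm : ∀ a b, oplus a b = oplus b a
  assoc : ∀ a b c ab abc, oplus a b = some ab → oplus ab c = some abc →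
    ∃ bc, oplus b c = some bc ∧ oplus a bc = some abc
  compl_exists : ∀ a, ∃ b, oplus a b = some one
  compl_unique : ∀ a b c, oplus a b = some one → oplus a c = some one → b = c
  add_one : ∀ a b, oplus a one = some b → a = zero

namespace EffectAlgebra

variable {E : Type*} (A : EffectAlgebra E)

/-- `a ⊥ b` : the sum `a ⊕ b` is defined. -/
def Perp (a b : E) : Prop := (A.oplus a b).isSome

/-- `a ≤ b` iff `b = a ⊕ c` for some `c`. -/
def le (a b : E) : Prop := ∃ c, A.oplus a c = some b

/-- The orthosupplement `a'`: the unique `b` with `a ⊕ b = 1`. -/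
noncomputable def compl (a : E) : E :=
  @Classical.epsilon E ⟨A.zero⟩ fun b => A.oplus a b = some A.one

/-- `a ⊖ b` : the unique `c` with `b ⊕ c = a` (defined when `b ≤ a`). -/
noncomputable def ominus (a b : E) : E :=
  @Classical.epsilon E ⟨A.zero⟩ fun c => A.oplus b c = some a

/-- Homogeneity. -/
def Homogeneous : Prop :=
  ∀ u v₁ v₂ s, A.oplus v₁ v₂ = some s → A.le u s → A.le u (A.compl s) →
    ∃ u₁ u₂, A.le u₁ v₁ ∧ A.le u₂ v₂ ∧ A.oplus u₁ u₂ = some u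

/-- Riesz decomposition property. -/
def RDP : Prop :=
  ∀ u v₁ v₂ s, A.oplus v₁ v₂ = some s → A.le u s →
    ∃ u₁ u₂, A.le u₁ v₁ ∧ A.le u₂ v₂ ∧ A.oplus u₁ u₂ = some u

/-- The sum `c₁ ⊕ … ⊕ cₙ` of a finite family (a list); `some s` iff the family
is orthogonal with sum `s`. -/
def sumList : List E → Option E
  | [] => some A.zero
  | x :: xs => (sumList xs).bind fun s => A.oplus x s

/-- The subfamily of `C` indexed by a set of indices `S ⊆ {1,…,n}`. -/
def pickList (C : List E) (S : Finset (Fin C.length)) : List E :=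
  (S.sort (· ≤ ·)).map C.get

/-- `C` is an orthogonal cover of `M`. -/
def IsCoverOf (C : List E) (M : Set E) : Prop :=
  (A.sumList C).isSome ∧
    ∀ a ∈ M, ∃ S : Finset (Fin C.length), A.sumList (pickList C S) = some a

/-- `M` is compatible with covers in `X`: every finite subset of `M` has an
orthogonal cover with range contained in `X`. -/
def CompatWithCoversIn (M X : Set E) : Prop :=
  ∀ F : Finset E, ↑F ⊆ M →
    ∃ C : List E, (∀ c ∈ C, c ∈ X) ∧ A.IsCoverOf C ↑F

/-- `M` is compatible (with covers in `E`). -/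
def Compatible (M : Set E) : Prop := A.CompatWithCoversIn M Set.univ

/-- `M` is internally compatible. -/
def InternallyCompatible (M : Set E) : Prop := A.CompatWithCoversIn M M

/-- `D` is a refinement of `C`: a partition `{P i}` of the index set of `D`
with `C i = ⊕_{j ∈ P i} D j`. -/
def IsRefinement (D C : List E) : Prop :=
  ∃ P : Fin C.length → Finset (Fin D.length),
    (∀ i j, i ≠ j → Disjoint (P i) (P j)) ∧
    (∀ k, ∃ i, k ∈ P i) ∧
    (∀ i, A.sumList (pickList D (P i)) = some (C.get i))

/-- One step of the closure construction `M ↦ M₁`. -/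
def closureStep (M : Set E) : Set E :=
  {x | ∃ y ∈ M, A.le x y ∧ A.le x (A.compl y)} ∪
  {z | ∃ y ∈ M, ∃ x, A.le x y ∧ A.le x (A.compl y) ∧ A.oplus x z = some y}

/-- The sets `Mₙ`. -/
def closureSeq (M : Set E) (n : ℕ) : Set E := (A.closureStep)^[n] M

/-- The closure `M̄ = ⋃ₙ Mₙ`. -/
def closure (M : Set E) : Set E := ⋃ n, A.closureSeq M n

/-- `B` is a sub-effect algebra of `E`. -/
def IsSubEA (B : Set E) : Prop :=
  A.one ∈ B ∧ ∀ a ∈ B, ∀ b ∈ B, A.le b a → A.ominus a b ∈ B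

/-- The Riesz decomposition property for (the effect algebra on) a subset `B`. -/
def RDPOn (B : Set E) : Prop :=
  ∀ u v₁ v₂ s, u ∈ B → v₁ ∈ B → v₂ ∈ B → A.oplus v₁ v₂ = some s → A.le u s →
    ∃ u₁ u₂, u₁ ∈ B ∧ u₂ ∈ B ∧ A.le u₁ v₁ ∧ A.le u₂ v₂ ∧ A.oplus u₁ u₂ = some u

/-- Homogeneity for (the effect algebra on) a subset `B`. -/
def HomogeneousOn (B : Set E) : Prop :=
  ∀ u v₁ v₂ s, u ∈ B → v₁ ∈ B → v₂ ∈ B → A.oplus v₁ v₂ = some s →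
    A.le u s → A.le u (A.compl s) →
    ∃ u₁ u₂, u₁ ∈ B ∧ u₂ ∈ B ∧ A.le u₁ v₁ ∧ A.le u₂ v₂ ∧ A.oplus u₁ u₂ = some u

/-- A block: a maximal sub-effect algebra satisfying the Riesz decomposition
property. -/
def IsBlock (B : Set E) : Prop :=
  A.IsSubEA B ∧ A.RDPOn B ∧
    ∀ B', A.IsSubEA B' → A.RDPOn B' → B ⊆ B' → B' = B

/-- A block of the sub-effect algebra on `F`: a maximal sub-effect algebra of
`F` satisfying the Riesz decomposition property. -/
def IsBlockIn (F B : Set E) : Prop :=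
  B ⊆ F ∧ A.IsSubEA B ∧ A.RDPOn B ∧
    ∀ B', B' ⊆ F → A.IsSubEA B' → A.RDPOn B' → B ⊆ B' → B' = B

/-- `a` is sharp: the infimum `a ∧ a'` exists and equals `0`, i.e. every common
lower bound of `a` and `a'` is `0`. -/
def Sharp (a : E) : Prop :=
  ∀ b, A.le b a → A.le b (A.compl a) → b = A.zero

/-- `a` is sharp in the sub-effect algebra on `F`. -/
def SharpIn (F : Set E) (a : E) : Prop :=
  a ∈ F ∧ ∀ b ∈ F, A.le b a → A.le b (A.compl a) → b = A.zero

/-- `a` is principal. -/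
def Principal (a : E) : Prop :=
  ∀ x y s, A.le x a → A.le y a → A.oplus x y = some s → A.le s a

/-- `a` is principal in the sub-effect algebra on `B`. -/
def PrincipalIn (B : Set E) (a : E) : Prop :=
  a ∈ B ∧ ∀ x ∈ B, ∀ y ∈ B, ∀ s, A.le x a → A.le y a →
    A.oplus x y = some s → A.le s a

/-- `a` is central: principal, and every `b` has a unique decomposition
`b = b₁ ⊕ b₂` with `b₁ ≤ a`, `b₂ ≤ a'`. -/
def Central (a : E) : Prop :=
  A.Principal a ∧ ∀ b, ∃! p : E × E,
    A.le p.1 a ∧ A.le p.2 (A.compl a) ∧ A.oplus p.1 p.2 = some b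

/-- `a` is central in the sub-effect algebra on `B`. -/
def CentralIn (B : Set E) (a : E) : Prop :=
  A.PrincipalIn B a ∧ ∀ b ∈ B, ∃! p : E × E,
    p.1 ∈ B ∧ p.2 ∈ B ∧ A.le p.1 a ∧ A.le p.2 (A.compl a) ∧
      A.oplus p.1 p.2 = some b

/-- The center `C(E)`. -/
def center : Set E := {a | A.Central a}

/-- The compatibility center `K(E)`: the intersection of all blocks. -/
def compatCenter : Set E := {x | ∀ B, A.IsBlock B → x ∈ B}

end EffectAlgebra

namespace EffectAlgebra

variable {E : Type*} (A : EffectAlgebra E)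

/-- The partial sum extended to `Option E`. -/
def oadd (a b : Option E) : Option E := a.bind fun x => b.bind fun y => A.oplus x y

theorem oadd_comm (a b : Option E) : A.oadd a b = A.oadd b a := by
  cases a <;> cases b <;> simp [oadd, A.comm]

theorem assoc' (a b c : E) :
    (A.oplus a b).bind (fun x => A.oplus x c) = (A.oplus b c).bind (fun x => A.oplus a x) := by
  ext z
  simp only [Option.bind_eq_some_iff]
  constructor
  · rintro ⟨x, h1, h2⟩
    exact A.assoc _ _ _ _ _ h1 h2
  · rintro ⟨x, h1, h2⟩
    rw [A.comm] at h1 h2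
    obtain ⟨w, h3, h4⟩ := A.assoc _ _ _ _ _ h1 h2
    exact ⟨w, by rw [A.comm]; exact h3, by rw [A.comm]; exact h4⟩

theorem oadd_assoc (a b c : Option E) :
    A.oadd (A.oadd a b) c = A.oadd a (A.oadd b c) := by
  cases a <;> cases b <;> cases c <;> simp [oadd]
  exact A.assoc' _ _ _

theorem one_zero : A.oplus A.one A.zero = some A.one := by
  obtain ⟨b, hb⟩ := A.compl_exists A.one
  have : b = A.zero := A.add_one b A.one (by rw [A.comm]; exact hb)
  rwa [← this]

theorem add_zero' (a : E) : A.oplus a A.zero = some a := by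
  obtain ⟨b, hb⟩ := A.compl_exists a
  have hb' := hb
  rw [A.comm] at hb
  obtain ⟨t, h1, h2⟩ := A.assoc _ _ _ _ _ hb A.one_zero
  rw [h1, A.compl_unique _ _ _ h2 hb]

theorem zero_add' (a : E) : A.oplus A.zero a = some a := by
  rw [A.comm, A.add_zero']

theorem cancel {a b c d : E} (h1 : A.oplus a b = some c) (h2 : A.oplus a d = some c) :
    b = d := by
  obtain ⟨c', hc⟩ := A.compl_exists c
  rw [A.comm] at h1 h2
  obtain ⟨s, h3, h4⟩ := A.assoc _ _ _ _ _ h1 hc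
  obtain ⟨t, h5, h6⟩ := A.assoc _ _ _ _ _ h2 hc
  rw [h3] at h5
  cases h5
  rw [A.comm] at h4 h6
  exact A.compl_unique _ _ _ h4 h6

theorem compl_spec (a : E) : A.oplus a (A.compl a) = some A.one :=
  Classical.epsilon_spec (A.compl_exists a)

theorem le_trans' {a b c : E} (h1 : A.le a b) (h2 : A.le b c) : A.le a c := by
  obtain ⟨x, hx⟩ := h1
  obtain ⟨y, hy⟩ := h2
  obtain ⟨t, _, h⟩ := A.assoc _ _ _ _ _ hx hy
  exact ⟨t, h⟩

theorem compl_anti {a b : E} (h : A.le a b) : A.le (A.compl b) (A.compl a) := by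
  obtain ⟨d, hd⟩ := h
  obtain ⟨e, h1, h2⟩ := A.assoc _ _ _ _ _ hd (A.compl_spec b)
  rw [A.compl_unique _ _ _ (A.compl_spec a) h2]
  exact ⟨d, by rw [A.comm]; exact h1⟩

theorem zero_le' (a : E) : A.le A.zero a := ⟨a, A.zero_add' a⟩

theorem le_zero {x : E} (h : A.le x A.zero) : x = A.zero := by
  obtain ⟨c, hc⟩ := h
  obtain ⟨t, h1, h2⟩ := A.assoc _ _ _ _ _ hc (A.zero_add' A.one)
  have := A.add_one _ _ h1
  subst this
  rw [A.add_zero'] at hc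
  exact Option.some.inj hc

theorem sumList_cons (x : E) (l : List E) :
    A.sumList (x :: l) = A.oadd (some x) (A.sumList l) := by
  simp [sumList, oadd]

theorem zero_oadd (a : Option E) : A.oadd (some A.zero) a = a := by
  cases a <;> simp [oadd, zero_add']

theorem sumList_append (l r : List E) :
    A.sumList (l ++ r) = A.oadd (A.sumList l) (A.sumList r) := by
  induction l with
  | nil => simp [sumList, zero_oadd]
  | cons a l ih => rw [List.cons_append, sumList_cons, sumList_cons, ih, oadd_assoc]

theorem sumList_perm {l r : List E} (h : l.Perm r) : A.sumList l = A.sumList r := by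
  induction h with
  | nil => rfl
  | cons x _ ih => rw [sumList_cons, sumList_cons, ih]
  | swap x y l =>
    simp only [sumList_cons]
    rw [← oadd_assoc, ← oadd_assoc, A.oadd_comm (some y)]
  | trans _ _ h1 h2 => exact h1.trans h2

/-- `a` is the sum of a subfamily of `C`. -/
def Cov (C : List E) (a : E) : Prop := ∃ l, l.Subperm C ∧ A.sumList l = some a

theorem cov_iff (C : List E) (a : E) :
    A.Cov C a ↔ ∃ S : Finset (Fin C.length), A.sumList (pickList C S) = some a := by
  constructor
  · rintro ⟨l, ⟨l', hp, hs⟩, h⟩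
    obtain ⟨is, h1, h2⟩ := List.sublist_eq_map_getElem hs
    have h1 : l' = is.map C.get := h1
    refine ⟨is.toFinset, ?_⟩
    have : is.toFinset.sort (· ≤ ·) = is := by
      apply List.Perm.eq_of_pairwise' (r := (· ≤ ·))
      · exact Finset.pairwise_sort _ _
      · exact h2.imp le_of_lt
      · rw [List.perm_ext_iff_of_nodup (Finset.sort_nodup _ _) (h2.imp ne_of_lt)]
        simp
    rw [pickList, this, ← h1, A.sumList_perm hp, h]
  · rintro ⟨S, h⟩
    refine ⟨_, ?_, h⟩
    apply List.Sublist.subperm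
    exact List.map_getElem_sublist (Finset.sortedLT_sort S).pairwise

theorem cov_perm {C D : List E} (h : C.Perm D) {a : E} (hc : A.Cov C a) : A.Cov D a := by
  obtain ⟨l, h1, h2⟩ := hc
  exact ⟨l, h1.trans h.subperm, h2⟩

theorem cov_split {c u v : E} {R : List E} (h : A.oplus u v = some c) {a : E}
    (hc : A.Cov (c :: R) a) : A.Cov (u :: v :: R) a := by
  obtain ⟨l, ⟨l', hp, hs⟩, hl⟩ := hc
  rw [← A.sumList_perm hp] at hl
  cases hs with
  | cons _ hs => exact ⟨l', ((hs.cons v).cons u).subperm, hl⟩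
  | @cons_cons l' _ _ hs =>
    refine ⟨u :: v :: l', ((hs.cons_cons v).cons_cons u).subperm, ?_⟩
    rw [sumList_cons, sumList_cons, ← oadd_assoc]
    rw [sumList_cons] at hl
    simpa [oadd, h] using hl

/-- Closed under one step. -/
def StepClosed (X : Set E) : Prop :=
  ∀ c ∈ X, ∀ u v, A.oplus u v = some c → A.le u (A.compl c) → u ∈ X ∧ v ∈ X

theorem split (hH : A.Homogeneous) {X : Set E} (hX : A.StepClosed X) (l : List E) :
    ∀ x y, (∀ c ∈ l, c ∈ X) → A.sumList l = some y → A.le x y → A.le x (A.compl y) →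
    ∃ l1 l2 : List E, (∀ c ∈ l1 ++ l2, c ∈ X) ∧ A.sumList l1 = some x ∧
      A.sumList (l1 ++ l2) = A.sumList l ∧
      ∀ r a, A.Cov (l ++ r) a → A.Cov (l1 ++ l2 ++ r) a := by
  induction l with
  | nil =>
    intro x y _ hy hx _
    simp only [sumList, Option.some.injEq] at hy
    subst hy
    have := A.le_zero hx
    subst this
    exact ⟨[], [], by simp, rfl, rfl, fun r a h => h⟩
  | cons c l ih =>
    intro x y hl hy hx hx'
    have hcy := hy
    simp only [sumList, Option.bind_eq_some_iff] at hy
    obtain ⟨s, hs, hcs⟩ := hy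
    obtain ⟨x1, x2, h1, h2, h12⟩ := hH x c s y hcs hx hx'
    have hc : A.le c y := ⟨s, hcs⟩
    have hsy : A.le s y := ⟨c, by rw [A.comm]; exact hcs⟩
    have hx1 : A.le x1 (A.compl c) :=
      A.le_trans' (A.le_trans' ⟨x2, h12⟩ hx') (A.compl_anti hc)
    have hx2 : A.le x2 (A.compl s) :=
      A.le_trans' (A.le_trans' ⟨x1, by rw [A.comm]; exact h12⟩ hx') (A.compl_anti hsy)
    obtain ⟨l1, l2, hm, e1, e2, hcov⟩ := ih x2 s (fun d hd => hl d (by simp [hd])) hs h2 hx2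
    obtain ⟨v, hv⟩ := h1
    obtain ⟨m1, m2⟩ := hX c (hl c (by simp)) x1 v hv hx1
    refine ⟨x1 :: l1, v :: l2, ?_, ?_, ?_, ?_⟩
    · intro d hd
      simp only [List.mem_append, List.mem_cons] at hd hm
      rcases hd with (rfl | hd) | (rfl | hd)
      · exact m1
      · exact hm _ (Or.inl hd)
      · exact m2
      · exact hm _ (Or.inr hd)
    · simp [sumList, e1, h12]
    · have hp : (x1 :: l1 ++ v :: l2).Perm (x1 :: v :: (l1 ++ l2)) :=
        List.Perm.cons x1 List.perm_middle
      rw [A.sumList_perm hp, sumList_cons, sumList_cons, ← oadd_assoc, e2, A.sumList_cons c]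
      simp [oadd, hv]
    · intro r a ha
      have hp : (c :: l ++ r).Perm (l ++ c :: r) := List.perm_middle.symm
      have k1 := hcov _ _ (A.cov_perm hp ha)
      have k2 := A.cov_split hv (A.cov_perm List.perm_middle k1)
      refine A.cov_perm ?_ k2
      have hp' : (x1 :: l1 ++ v :: l2).Perm (x1 :: v :: (l1 ++ l2)) :=
        List.Perm.cons x1 List.perm_middle
      exact (hp'.append_right r).symm

theorem refine_step (hH : A.Homogeneous) {X : Set E} (hX : A.StepClosed X) {C : List E}
    (hC : ∀ c ∈ C, c ∈ X) (hs : (A.sumList C).isSome) {x y z : E} (hy : A.Cov C y)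
    (hx : A.le x (A.compl y)) (hz : A.oplus x z = some y) :
    ∃ D : List E, (∀ c ∈ D, c ∈ X) ∧ (A.sumList D).isSome ∧
      (∀ a, A.Cov C a → A.Cov D a) ∧ A.Cov D x ∧ A.Cov D z := by
  obtain ⟨l, hl, hly⟩ := hy
  obtain ⟨r, hr⟩ : ∃ r, C.Perm (l ++ r) := by
    obtain ⟨l', hp, hs'⟩ := hl
    obtain ⟨r, hr⟩ := hs'.exists_perm_append
    exact ⟨r, hr.trans (hp.append_right r)⟩
  obtain ⟨l1, l2, hm, e1, e2, hcov⟩ := A.split hH hX l x y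
    (fun c hc => hC c (hr.mem_iff.2 (by simp [hc]))) hly ⟨z, hz⟩ hx
  have e3 : A.sumList l2 = some z := by
    rw [sumList_append, e1, hly] at e2
    simp only [oadd, Option.bind_some, Option.bind_eq_some_iff] at e2
    obtain ⟨w, hw, hw'⟩ := e2
    rw [hw, A.cancel hw' hz]
  refine ⟨l1 ++ l2 ++ r, ?_, ?_, ?_, ?_, ?_⟩
  · intro c hc
    rcases List.mem_append.1 hc with h | h
    · exact hm c h
    · exact hC c (hr.mem_iff.2 (by simp [h]))
  · rw [sumList_append, e2, ← sumList_append, ← A.sumList_perm hr]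
    exact hs
  · intro a ha
    exact hcov _ _ (A.cov_perm hr ha)
  · exact ⟨l1, by rw [List.append_assoc]; exact (List.sublist_append_left _ _).subperm, e1⟩
  · refine ⟨l2, ?_, e3⟩
    rw [List.append_assoc]
    exact ((List.sublist_append_left l2 r).trans (List.sublist_append_right l1 _)).subperm

theorem seq_succ (M : Set E) (n : ℕ) :
    A.closureSeq M (n + 1) = A.closureStep (A.closureSeq M n) := by
  simp [closureSeq, Function.iterate_succ_apply']

theorem seq_mono (M : Set E) : Monotone (A.closureSeq M) := by
  apply monotone_nat_of_le_succ
  intro n y hy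
  rw [seq_succ]
  exact Or.inr ⟨y, hy, A.zero, A.zero_le' _, A.zero_le' _, A.zero_add' y⟩

theorem closure_closed (M : Set E) : A.StepClosed (A.closure M) := by
  intro c hc u v huv hu
  obtain ⟨n, hn⟩ := Set.mem_iUnion.1 hc
  constructor
  · refine Set.mem_iUnion.2 ⟨n + 1, ?_⟩
    rw [seq_succ]
    exact Or.inl ⟨c, hn, ⟨v, huv⟩, hu⟩
  · refine Set.mem_iUnion.2 ⟨n + 1, ?_⟩
    rw [seq_succ]
    exact Or.inr ⟨c, hn, u, ⟨v, huv⟩, hu, huv⟩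

theorem mem_step {N : Set E} {a : E} (h : a ∈ A.closureStep N) :
    ∃ y ∈ N, ∃ x z, A.le x (A.compl y) ∧ A.oplus x z = some y ∧ (a = x ∨ a = z) := by
  rcases h with ⟨y, hy, ⟨z, hz⟩, h⟩ | ⟨y, hy, x, _, h, hz⟩
  · exact ⟨y, hy, a, z, h, hz, Or.inl rfl⟩
  · exact ⟨y, hy, x, a, h, hz, Or.inr rfl⟩

/-- Covers in the closure, formulated with `Cov`. -/
theorem seq_cov (hH : A.Homogeneous) {M : Set E} (hM : A.InternallyCompatible M) (n : ℕ) :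
    ∀ F : Finset E, ↑F ⊆ A.closureSeq M n →
      ∃ C : List E, (∀ c ∈ C, c ∈ A.closure M) ∧ (A.sumList C).isSome ∧
        ∀ a ∈ F, A.Cov C a := by
  classical
  induction n with
  | zero =>
    intro F hF
    obtain ⟨C, h1, h2, h3⟩ := hM F hF
    exact ⟨C, fun c hc => Set.mem_iUnion.2 ⟨0, h1 c hc⟩, h2,
      fun a ha => (A.cov_iff C a).2 (h3 a ha)⟩
  | succ n ih =>
    intro F hF
    -- strengthen: keep an additional finite set of elements at level `n` covered
    have key : ∀ F : Finset E, ↑F ⊆ A.closureSeq M (n + 1) → ∀ G : Finset E,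
        ↑G ⊆ A.closureSeq M n →
        ∃ C : List E, (∀ c ∈ C, c ∈ A.closure M) ∧ (A.sumList C).isSome ∧
          (∀ a ∈ F, A.Cov C a) ∧ ∀ a ∈ G, A.Cov C a := by
      intro F
      induction F using Finset.induction_on with
      | empty =>
        intro _ G hG
        obtain ⟨C, h1, h2, h3⟩ := ih G hG
        exact ⟨C, h1, h2, by simp, h3⟩
      | insert a F _ ihF =>
        intro hF G hG
        have ha : a ∈ A.closureSeq M (n + 1) := hF (by simp)
        rw [seq_succ] at ha
        obtain ⟨y, hy, x, z, hx, hz, haz⟩ := A.mem_step ha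
        obtain ⟨C, h1, h2, h3, h4⟩ := ihF (fun b hb => hF (by
          simp only [Finset.coe_insert]; exact Or.inr hb)) (insert y G) (by
            intro b hb
            simp only [Finset.coe_insert] at hb
            rcases hb with rfl | hb
            · exact hy
            · exact hG hb)
        obtain ⟨D, k1, k2, k3, k4, k5⟩ := A.refine_step hH (A.closure_closed M) h1 h2
          (h4 y (by simp)) hx hz
        refine ⟨D, k1, k2, ?_, fun b hb => k3 _ (h4 b (by simp [hb]))⟩
        intro b hb
        rcases Finset.mem_insert.1 hb with rfl | hb
        · rcases haz with rfl | rfl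
          · exact k4
          · exact k5
        · exact k3 _ (h3 b hb)
    obtain ⟨C, h1, h2, h3, _⟩ := key F hF ∅ (by simp)
    exact ⟨C, h1, h2, h3⟩

theorem closure_ic (hH : A.Homogeneous) {M : Set E} (hM : A.InternallyCompatible M) :
    A.InternallyCompatible (A.closure M) := by
  intro F hF
  obtain ⟨n, hn⟩ : ∃ n, (F : Set E) ⊆ A.closureSeq M n :=
    (A.seq_mono M).directed_le.exists_mem_subset_of_finset_subset_biUnion hF
  obtain ⟨C, h1, h2, h3⟩ := A.seq_cov hH hM n F hn
  exact ⟨C, h1, h2, fun a ha => (A.cov_iff C a).1 (h3 a ha)⟩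

end EffectAlgebra

/-- (a) the closure of an internally compatible set is internally
compatible; (b) a maximal internally compatible set is closed. -/
theorem internally_compatible_closure {E : Type*} (A : EffectAlgebra E)
    (hH : A.Homogeneous) :
    (∀ M : Set E, A.InternallyCompatible M →
      A.InternallyCompatible (A.closure M)) ∧
    (∀ M : Set E, A.InternallyCompatible M →
      (∀ N : Set E, A.InternallyCompatible N → M ⊆ N → M = N) →
      M = A.closure M) := by
  refine ⟨fun M hM => A.closure_ic hH hM, fun M hM hmax => ?_⟩
  exact hmax _ (A.closure_ic hH hM) fun y hy => Set.mem_iUnion.2 ⟨0, hy⟩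
end

section
/- Let E be a homogeneous effect algebra and let M be an internally compatible subset of E with M = M̄. If a, b ∈ M and b ≤ a, then M ∪ {a ⊖ b} is an internally compatible set. -/
namespace EffectAlgebra

/-- The total (absorbing) extension of the partial operation to `Option E`. -/
def Ext {E : Type*} (_A : EffectAlgebra E) : Type _ := Option E

/-- The embedding of `E` in the extension. -/
def emb {E : Type*} (A : EffectAlgebra E) (a : E) : A.Ext := (some a : Option E)

/-- The total addition. -/
def extAdd {E : Type*} (A : EffectAlgebra E) (x y : Option E) : Option E :=
  x.bind fun a => y.bind fun b => A.oplus a b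

theorem extAdd_eq_some {E : Type*} (A : EffectAlgebra E) (x y : Option E) (z : E) :
    A.extAdd x y = some z ↔ ∃ a b, x = some a ∧ y = some b ∧ A.oplus a b = some z := by
  cases x <;> cases y <;> simp [extAdd]

theorem extAdd_comm {E : Type*} (A : EffectAlgebra E) (x y : Option E) :
    A.extAdd x y = A.extAdd y x := by
  cases x <;> cases y <;> simp [extAdd, A.comm]

theorem extAdd_assoc_aux {E : Type*} (A : EffectAlgebra E) (x y z : Option E) (w : E)
    (h : A.extAdd (A.extAdd x y) z = some w) : A.extAdd x (A.extAdd y z) = some w := by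
  rw [extAdd_eq_some] at h
  obtain ⟨ab, c, h1, rfl, h2⟩ := h
  rw [extAdd_eq_some] at h1
  obtain ⟨a, b, rfl, rfl, h1⟩ := h1
  obtain ⟨bc, h3, h4⟩ := A.assoc a b c ab w h1 h2
  simp [extAdd, h3, h4]

theorem extAdd_assoc {E : Type*} (A : EffectAlgebra E) (x y z : Option E) :
    A.extAdd (A.extAdd x y) z = A.extAdd x (A.extAdd y z) := by
  apply Option.ext
  intro w
  constructor
  · exact A.extAdd_assoc_aux x y z w
  · intro h
    rw [A.extAdd_comm, A.extAdd_comm y z] at h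
    have := A.extAdd_assoc_aux _ _ _ w h
    rw [A.extAdd_comm, A.extAdd_comm y x] at this
    exact this

theorem oplus_zero {E : Type*} (A : EffectAlgebra E) (a : E) :
    A.oplus a A.zero = some a := by
  obtain ⟨x, hx⟩ := A.compl_exists A.one
  have hx0 : x = A.zero := A.add_one x A.one (by rw [A.comm]; exact hx)
  rw [hx0] at hx
  obtain ⟨a', ha'⟩ := A.compl_exists a
  obtain ⟨z, h1, h2⟩ := A.assoc a' a A.zero A.one A.one (by rw [A.comm]; exact ha') hx
  have : z = a := A.compl_unique a' z a h2 (by rw [A.comm]; exact ha')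
  rw [h1, this]

theorem extAdd_zero {E : Type*} (A : EffectAlgebra E) (x : Option E) :
    A.extAdd x (some A.zero) = x := by
  cases x <;> simp [extAdd, oplus_zero]

theorem zero_extAdd {E : Type*} (A : EffectAlgebra E) (x : Option E) :
    A.extAdd (some A.zero) x = x := by
  rw [A.extAdd_comm, extAdd_zero]

instance {E : Type*} (A : EffectAlgebra E) : Zero A.Ext := ⟨A.emb A.zero⟩

instance {E : Type*} (A : EffectAlgebra E) : Add A.Ext := ⟨fun x y => A.extAdd x y⟩

instance {E : Type*} (A : EffectAlgebra E) : AddCommMonoid A.Ext where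
  add_assoc x y z := A.extAdd_assoc x y z
  add_comm x y := A.extAdd_comm x y
  zero_add x := A.zero_extAdd x
  add_zero x := A.extAdd_zero x
  nsmul := nsmulRec

theorem emb_inj {E : Type*} (A : EffectAlgebra E) {a b : E} (h : A.emb a = A.emb b) : a = b :=
  Option.some.inj h

theorem emb_add {E : Type*} (A : EffectAlgebra E) (a b : E) :
    A.emb a + A.emb b = (A.oplus a b : Option E) := rfl

theorem emb_zero {E : Type*} (A : EffectAlgebra E) : A.emb A.zero = 0 := rfl

theorem add_eq {E : Type*} (A : EffectAlgebra E) {a b c : E} :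
    A.emb a + A.emb b = A.emb c ↔ A.oplus a b = some c := Iff.rfl

theorem le_iff {E : Type*} (A : EffectAlgebra E) {a b : E} :
    A.le a b ↔ ∃ c, A.emb a + A.emb c = A.emb b := Iff.rfl

theorem split_s8 {E : Type*} (A : EffectAlgebra E) {x y : A.Ext} {c : E}
    (h : x + y = A.emb c) : ∃ a b, x = A.emb a ∧ y = A.emb b := by
  obtain ⟨a, b, h1, h2, -⟩ := (A.extAdd_eq_some x y c).1 h
  exact ⟨a, b, h1, h2⟩

theorem emb_compl {E : Type*} (A : EffectAlgebra E) (a : E) :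
    A.emb a + A.emb (A.compl a) = A.emb A.one :=
  Classical.epsilon_spec (p := fun b => A.oplus a b = some A.one) (A.compl_exists a)

theorem cancel_s8 {E : Type*} (A : EffectAlgebra E) {x y z : A.Ext} {e : E}
    (h1 : x + y = A.emb e) (h2 : x + z = A.emb e) : y = z := by
  have h3 := A.emb_compl e
  have h4 : (A.emb (A.compl e) + x) + y = A.emb A.one := by
    rw [add_assoc, h1, add_comm, h3]
  have h5 : (A.emb (A.compl e) + x) + z = A.emb A.one := by
    rw [add_assoc, h2, add_comm, h3]
  obtain ⟨f, b, hf, rfl⟩ := A.split_s8 h4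
  obtain ⟨_, c, -, rfl⟩ := A.split_s8 h5
  rw [hf] at h4 h5
  rw [A.compl_unique f b c h4 h5]

theorem le_compl_iff {E : Type*} (A : EffectAlgebra E) {u s : E} :
    A.le u (A.compl s) ↔ ∃ z, A.emb u + A.emb s = A.emb z := by
  have h := A.emb_compl s
  constructor
  · rintro ⟨c, hc⟩
    rw [← A.add_eq] at hc
    rw [← hc, ← add_assoc] at h
    obtain ⟨z, _, hz, -⟩ := A.split_s8 h
    exact ⟨z, by rw [add_comm, hz]⟩
  · rintro ⟨z, hz⟩
    refine ⟨A.compl z, ?_⟩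
    rw [← A.add_eq]
    refine A.cancel_s8 (x := A.emb s) (e := A.one) ?_ h
    rw [← add_assoc, add_comm (A.emb s), hz, A.emb_compl]

theorem homog_sum {E : Type*} (A : EffectAlgebra E) (hH : A.Homogeneous) {ι : Type*}
    [DecidableEq ι] (c : ι → E) (T : Finset ι) : ∀ (p u r z : E),
    ∑ i ∈ T, A.emb (c i) = A.emb p → A.emb u + A.emb r = A.emb p →
    A.emb u + A.emb p = A.emb z →
    ∃ q : ι → E, (∀ i ∈ T, A.le (q i) (c i)) ∧ ∑ i ∈ T, A.emb (q i) = A.emb u := by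
  induction T using Finset.induction_on with
  | empty =>
    intro p u r z h1 h2 _
    refine ⟨c, by simp, ?_⟩
    rw [Finset.sum_empty] at h1 ⊢
    rw [← h1, ← A.emb_zero] at h2
    -- u + r = 0 forces u = 0
    have h3 : A.emb A.one + A.emb u + A.emb r = A.emb A.one := by
      rw [add_assoc, h2, A.emb_zero, add_zero]
    obtain ⟨w, _, hw, -⟩ := A.split_s8 h3
    rw [A.add_one u w (by rw [A.comm]; exact hw), A.emb_zero]
  | insert i T hi ih =>
    intro p u r z h1 h2 h3
    rw [Finset.sum_insert hi] at h1
    obtain ⟨_, pT, -, hT⟩ := A.split_s8 h1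
    rw [hT] at h1
    obtain ⟨u1, u2, ⟨r1, hu1⟩, ⟨r2, hu2⟩, hu⟩ :=
      hH u (c i) pT p h1 ⟨r, h2⟩ (A.le_compl_iff.2 ⟨z, h3⟩)
    rw [← A.add_eq] at hu hu2
    have h4 : (A.emb u1 + A.emb (c i)) + (A.emb u2 + A.emb pT) = A.emb z := by
      rw [← h3, ← h1, ← hu]; abel
    obtain ⟨_, z2, -, hz2⟩ := A.split_s8 h4
    obtain ⟨q, hq, hqs⟩ := ih pT u2 r2 z2 hT hu2 hz2
    refine ⟨Function.update q i u1, ?_, ?_⟩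
    · intro j hj
      by_cases hji : j = i
      · subst hji; simpa using ⟨r1, hu1⟩
      · simpa [hji] using hq j (Finset.mem_of_mem_insert_of_ne hj hji)
    · rw [Finset.sum_insert hi, Function.update_self, ← hu, ← hqs]
      congr 1
      apply Finset.sum_congr rfl
      intro j hj
      rw [Function.update_of_ne (by rintro rfl; exact hi hj)]

theorem sumList_eq {E : Type*} (A : EffectAlgebra E) (C : List E) :
    A.sumList C = ((C.map A.emb).sum : A.Ext) := by
  induction C with
  | nil => rfl
  | cons x xs ih =>
    rw [List.map_cons, List.sum_cons, ← ih]
    rfl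

theorem sumList_pick {E : Type*} (A : EffectAlgebra E) (C : List E)
    (S : Finset (Fin C.length)) :
    A.sumList (pickList C S) = (∑ i ∈ S, A.emb (C.get i) : A.Ext) := by
  rw [sumList_eq, pickList, List.map_map]
  have h := Finset.sum_map_toList S (fun i => A.emb (C.get i))
  rw [← h]
  refine List.Perm.sum_eq (M := A.Ext) (List.Perm.map _ ?_)
  apply (List.perm_ext_iff_of_nodup (Finset.sort_nodup _ _) (Finset.nodup_toList _)).2
  simp

theorem sumList_univ {E : Type*} (A : EffectAlgebra E) (C : List E) :
    A.sumList C = (∑ i, A.emb (C.get i) : A.Ext) := by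
  rw [sumList_eq, ← List.sum_ofFn]
  congr 1
  conv_lhs => rw [← List.ofFn_get C, List.map_ofFn]
  rfl

theorem cover_of_family {E : Type*} (A : EffectAlgebra E) {ι : Type*} [Fintype ι]
    (d : ι → E) (s : E) (hs : ∑ i, A.emb (d i) = A.emb s) (X F : Set E)
    (hX : ∀ i, d i ∈ X)
    (hF : ∀ a ∈ F, ∃ S : Finset ι, ∑ i ∈ S, A.emb (d i) = A.emb a) :
    ∃ C : List E, (∀ c ∈ C, c ∈ X) ∧ A.IsCoverOf C F := by
  obtain ⟨C, e, he⟩ : ∃ (C : List E) (e : ι ≃ Fin C.length), ∀ i, C.get (e i) = d i := by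
    refine ⟨List.ofFn (d ∘ (Fintype.equivFin ι).symm),
      (Fintype.equivFin ι).trans (finCongr (by simp)), ?_⟩
    intro i
    simp
  refine ⟨C, ?_, ?_, ?_⟩
  · intro c hc
    obtain ⟨k, rfl⟩ := List.get_of_mem hc
    have := he (e.symm k)
    rw [e.apply_symm_apply] at this
    rw [this]
    exact hX _
  · rw [sumList_univ, ← Equiv.sum_comp e]
    simp only [he]
    rw [hs]; rfl
  · intro a ha
    obtain ⟨S, hS⟩ := hF a ha
    refine ⟨S.map e.toEmbedding, ?_⟩
    rw [sumList_pick, Finset.sum_map]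
    simp only [Equiv.coe_toEmbedding, he]
    exact hS

end EffectAlgebra

open EffectAlgebra

theorem internally_compatible_union_ominus {E : Type*} (A : EffectAlgebra E)
    (hH : A.Homogeneous) (M : Set E) (hM : A.InternallyCompatible M)
    (hcl : M = A.closure M) (a b : E) (ha : a ∈ M) (hb : b ∈ M)
    (hba : A.le b a) :
    A.InternallyCompatible (M ∪ {A.ominus a b}) := by
  classical
  have hstep : A.closureStep M ⊆ M := by
    intro x hx
    rw [hcl]
    exact Set.mem_iUnion.2 ⟨1, hx⟩
  have hom : A.emb b + A.emb (A.ominus a b) = A.emb a :=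
    Classical.epsilon_spec (p := fun c => A.oplus b c = some a) hba
  have h0 : A.zero ∈ M := by
    refine hstep (Or.inl ⟨a, ha, ⟨a, ?_⟩, A.le_compl_iff.2 ⟨a, ?_⟩⟩)
    · rw [← A.add_eq, A.emb_zero, zero_add]
    · rw [A.emb_zero, zero_add]
  intro F hF
  set G : Finset E := insert a (insert b (F.erase (A.ominus a b))) with hG
  have hGM : (↑G : Set E) ⊆ M := by
    intro x hx
    simp only [hG, Finset.coe_insert, Set.mem_insert_iff, Finset.mem_coe,
      Finset.mem_erase] at hx
    rcases hx with rfl | rfl | ⟨hne, hx⟩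
    · exact ha
    · exact hb
    · rcases hF hx with h | h
      · exact h
      · exact absurd h hne
  obtain ⟨C, hCM, hCs, hC⟩ := hM G hGM
  obtain ⟨s, hs⟩ := Option.isSome_iff_exists.1 hCs
  rw [sumList_univ] at hs
  simp only [sumList_pick] at hC
  set c : Fin C.length → E := C.get with hc
  have hcM : ∀ i, c i ∈ M := fun i => hCM _ (List.get_mem _ _)
  change ∑ i, A.emb (c i) = A.emb s at hs
  obtain ⟨P, hP⟩ := hC a (by simp [hG])
  obtain ⟨Q, hQ⟩ := hC b (by simp [hG])
  change ∑ i ∈ P, A.emb (c i) = A.emb a at hP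
  change ∑ i ∈ Q, A.emb (c i) = A.emb b at hQ
  have hPs : ∑ i ∈ P \ Q, A.emb (c i) + ∑ i ∈ P ∩ Q, A.emb (c i) = A.emb a := by
    rw [← hP, add_comm, Finset.sum_inter_add_sum_sdiff]
  have hQs : ∑ i ∈ Q \ P, A.emb (c i) + ∑ i ∈ P ∩ Q, A.emb (c i) = A.emb b := by
    rw [← hQ, add_comm, Finset.inter_comm, Finset.sum_inter_add_sum_sdiff]
  obtain ⟨p, x, hp, hx⟩ := A.split_s8 hPs
  obtain ⟨q, _, hq, -⟩ := A.split_s8 hQs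
  rw [hp, hx] at hPs
  rw [hq, hx] at hQs
  have hqp : A.emb q + A.emb (A.ominus a b) = A.emb p := by
    apply A.cancel_s8 (x := A.emb x) (e := a)
    · rw [← hom, ← hQs]; abel
    · rw [← hPs]; abel
  have hperp : ∃ z, A.emb q + A.emb p = A.emb z := by
    have h1 : ∑ i ∈ (Q \ P) ∪ (P \ Q), A.emb (c i) = A.emb q + A.emb p := by
      rw [Finset.sum_union, hp, hq]
      exact disjoint_sdiff_sdiff
    have h2 := Finset.sum_add_sum_compl ((Q \ P) ∪ (P \ Q)) (fun i => A.emb (c i))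
    rw [hs, h1] at h2
    obtain ⟨z, _, hz, -⟩ := A.split_s8 h2
    exact ⟨z, hz⟩
  obtain ⟨z, hz⟩ := hperp
  obtain ⟨f, hfle, hfs⟩ := A.homog_sum hH c (P \ Q) p q _ z hp hqp hz
  -- the refined family
  have key : ∀ i, ∃ u v, A.emb u + A.emb v = A.emb (c i) ∧ u ∈ M ∧ v ∈ M ∧
      (i ∈ P \ Q → u = f i) := by
    intro i
    by_cases hi : i ∈ P \ Q
    · obtain ⟨v, hv⟩ := hfle i hi
      have hpc : A.le (f i) (A.compl (c i)) := by
        rw [A.le_compl_iff]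
        rw [← hfs, ← hp, ← Finset.add_sum_erase _ _ hi,
          ← Finset.add_sum_erase _ (fun i => A.emb (c i)) hi] at hz
        have h3 : (A.emb (f i) + A.emb (c i)) + (∑ j ∈ (P \ Q).erase i, A.emb (f j) +
            ∑ j ∈ (P \ Q).erase i, A.emb (c j)) = A.emb z := by
          rw [← hz]; abel
        obtain ⟨w, _, hw, -⟩ := A.split_s8 h3
        exact ⟨w, hw⟩
      exact ⟨f i, v, hv, hstep (Or.inl ⟨c i, hcM i, ⟨v, hv⟩, hpc⟩),
        hstep (Or.inr ⟨c i, hcM i, f i, ⟨v, hv⟩, hpc, hv⟩), fun _ => rfl⟩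
    · exact ⟨A.zero, c i, by rw [A.emb_zero, zero_add], h0, hcM i, fun h => absurd h hi⟩
  choose u v huv huM hvM huf using key
  have hsum : ∀ S : Finset (Fin C.length),
      ∑ i ∈ S.disjSum S, A.emb (Sum.elim u v i) = ∑ i ∈ S, A.emb (c i) := by
    intro S
    rw [Finset.sum_disjSum, ← Finset.sum_add_distrib]
    exact Finset.sum_congr rfl fun i _ => huv i
  refine A.cover_of_family (Sum.elim u v) s ?_ _ _ ?_ ?_
  · rw [← Finset.univ_disjSum_univ, hsum, hs]
  · rintro (i | i)
    · exact Or.inl (huM i)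
    · exact Or.inl (hvM i)
  · intro y hy
    by_cases hyo : y = A.ominus a b
    · refine ⟨(∅ : Finset (Fin C.length)).disjSum (P \ Q), ?_⟩
      rw [Finset.sum_disjSum, Finset.sum_empty, zero_add, hyo]
      apply A.cancel_s8 (x := A.emb q) (e := p) _ hqp
      rw [← hfs, ← hp, ← Finset.sum_add_distrib]
      refine Finset.sum_congr rfl fun i hi => ?_
      rw [← huv i, huf i hi]
      rfl
    · obtain ⟨S, hS⟩ := hC y (by
        simp only [hG, Finset.coe_insert, Set.mem_insert_iff, Finset.mem_coe,
          Finset.mem_erase]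
        exact Or.inr (Or.inr ⟨hyo, hy⟩))
      exact ⟨S.disjSum S, (hsum S).trans hS⟩
end
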